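/- For every even positive integer r, there exists a strong Gallai-Schur r-coloring of [1, 5^(r/2) − 1], and for every m ≥ 5^(r/2) there is no strong Gallai-Schur r-coloring of [1, m]. Equivalently, the strong Gallai-Schur number GS(r) equals 5^(r/2) for even r. -/

import Mathlib

/-- A strong Gallai–Schur coloring of the interval `[1, m]` with color set `C`:
`χ` maps `[1, m]` into `C`, is surjective onto `C`, admits no monochromatic
solution of `a + b = c` (with `a = b` allowed), and admits no rainbow solution
of `a + b = c`. -/
def StrongGS (m : ℕ) (C : Finset ℕ) (χ : ℕ → ℕ) : Prop :=
  (∀ x ∈ Finset.Icc 1 m, χ x ∈ C) ∧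
  (∀ i ∈ C, ∃ x ∈ Finset.Icc 1 m, χ x = i) ∧
  (∀ a ∈ Finset.Icc 1 m, ∀ b ∈ Finset.Icc 1 m, ∀ c ∈ Finset.Icc 1 m,
      a + b = c → ¬(χ a = χ b ∧ χ b = χ c)) ∧
  (∀ a ∈ Finset.Icc 1 m, ∀ b ∈ Finset.Icc 1 m, ∀ c ∈ Finset.Icc 1 m,
      a + b = c → ¬(χ a ≠ χ b ∧ χ a ≠ χ c ∧ χ b ≠ χ c))

/-- The strong Gallai–Schur number `GS r`: the least `n` such that no strong
Gallai–Schur `r`-coloring of `[1, m]` exists for any `m ≥ n`. -/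
noncomputable def GS (r : ℕ) : ℕ :=
  sInf {n : ℕ | ∀ m, n ≤ m → ∀ χ : ℕ → ℕ, ¬ StrongGS m (Finset.Icc 1 r) χ}

/-!
Consider a coloring of `[1, m]` without monochromatic or rainbow sums `a + b = c`. The colors of
`1` and `2` differ, and `1 + 2 = 3` gives `3` one of these two colors. If `χ 3 = χ 1`, then every
odd number has the color of `1` and no even number does, so halving the even numbers leaves a
coloring of `[1, m / 2]` with at least one color fewer. If `χ 3 = χ 2`, then the residues `±1` and
`±2` mod `5` have the colors of `1` and `2`, and the multiples of `5` have neither, so dividing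
these by `5` leaves a coloring of `[1, m / 5]` with at least two colors fewer. Two steps of the
first kind gain a factor of only `4`, so it is best to use the second kind as long as two colors
are left. Read backwards, it produces the extremal colorings.
-/

/-- The value of the strong Gallai–Schur number `GS r`, namely `5 ^ (r / 2)` for even `r` and
`2 * 5 ^ ((r - 1) / 2)` for odd `r`. -/
def gsBound (r : ℕ) : ℕ := 2 ^ (r % 2) * 5 ^ (r / 2)

theorem gsBound_pos (r : ℕ) : 0 < gsBound r := by
  unfold gsBound
  positivity

theorem gsBound_add_two (r : ℕ) : gsBound (r + 2) = 5 * gsBound r := by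
  simp only [gsBound, Nat.add_mod_right, Nat.add_div_right r two_pos]
  ring

theorem two_mul_gsBound_le (r : ℕ) : 2 * gsBound r ≤ gsBound (r + 1) := by
  obtain ⟨k, rfl | rfl⟩ := r.even_or_odd'
  · simp [gsBound, Nat.mul_add_div]
  · rw [gsBound_add_two (2 * k)]
    simp only [gsBound, Nat.mul_add_mod_self_left, Nat.mul_mod_right, Nat.mul_add_div two_pos,
      Nat.mul_div_cancel_left k two_pos, Nat.reduceMod, Nat.reduceDiv, add_zero]
    lia

theorem gsBound_mono : Monotone gsBound :=
  monotone_nat_of_le_succ fun r ↦ by linarith [two_mul_gsBound_le r]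

/-- A coloring of `[1, m]` without monochromatic and without rainbow solutions of `a + b = c`;
unlike in `StrongGS`, no set of colors is prescribed. -/
structure IsGallaiSchur {α : Type*} (m : ℕ) (χ : ℕ → α) : Prop where
  not_mono : ∀ ⦃a b⦄, 0 < a → 0 < b → a + b ≤ m → ¬(χ a = χ b ∧ χ b = χ (a + b))
  not_rainbow : ∀ ⦃a b⦄, 0 < a → 0 < b → a + b ≤ m →
    ¬(χ a ≠ χ b ∧ χ a ≠ χ (a + b) ∧ χ b ≠ χ (a + b))

/-- The set of colors that `χ` uses on `[1, m]`. -/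
def palette {α : Type*} [DecidableEq α] (χ : ℕ → α) (m : ℕ) : Finset α :=
  (Finset.Icc 1 m).image χ

section Palette

variable {α : Type*} [DecidableEq α] {χ : ℕ → α} {m : ℕ}

theorem mem_palette {i : α} : i ∈ palette χ m ↔ ∃ x, (0 < x ∧ x ≤ m) ∧ χ x = i := by
  simp [palette, Nat.one_le_iff_ne_zero, Nat.pos_iff_ne_zero]

theorem apply_mem_palette {x : ℕ} (hx : 0 < x) (hxm : x ≤ m) : χ x ∈ palette χ m :=
  mem_palette.mpr ⟨x, ⟨hx, hxm⟩, rfl⟩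

theorem card_palette_dilate_add_card_le {d : ℕ} (hd : 0 < d) {S : Finset α}
    (hS : S ⊆ palette χ m) (havoid : ∀ q, 0 < q → d * q ≤ m → χ (d * q) ∉ S) :
    (palette (fun q ↦ χ (d * q)) (m / d)).card + S.card ≤ (palette χ m).card := by
  have hle {q : ℕ} (hq : q ≤ m / d) : d * q ≤ m :=
    (Nat.mul_le_mul_left d hq).trans (Nat.mul_div_le m d)
  have hdisj : Disjoint (palette (fun q ↦ χ (d * q)) (m / d)) S := by
    simp only [Finset.disjoint_left, mem_palette]
    rintro _ ⟨q, ⟨hq, hqm⟩, rfl⟩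
    exact havoid q hq (hle hqm)
  have hsub : palette (fun q ↦ χ (d * q)) (m / d) ⊆ palette χ m := by
    intro i hi
    obtain ⟨q, ⟨hq, hqm⟩, rfl⟩ := mem_palette.mp hi
    exact apply_mem_palette (by positivity) (hle hqm)
  rw [← Finset.card_union_of_disjoint hdisj]
  exact Finset.card_le_card (Finset.union_subset hsub hS)

end Palette

theorem strongGS_iff {m : ℕ} {C : Finset ℕ} {χ : ℕ → ℕ} :
    StrongGS m C χ ↔ IsGallaiSchur m χ ∧ palette χ m = C := by
  constructor
  · rintro ⟨hmem, hsurj, hmono, hrainbow⟩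
    simp only [Finset.mem_Icc] at hmem hsurj hmono hrainbow
    refine ⟨⟨fun a b ha hb hab ↦ ?_, fun a b ha hb hab ↦ ?_⟩, Finset.ext fun i ↦ ?_⟩
    · exact hmono a (by lia) b (by lia) (a + b) (by lia) rfl
    · exact hrainbow a (by lia) b (by lia) (a + b) (by lia) rfl
    · exact mem_palette.trans ⟨fun ⟨x, hx, hi⟩ ↦ hi ▸ hmem x hx, hsurj i⟩
  · rintro ⟨h, rfl⟩
    simp only [StrongGS, Finset.mem_Icc]
    refine ⟨fun x hx ↦ apply_mem_palette hx.1 hx.2, fun i hi ↦ mem_palette.mp hi, ?_, ?_⟩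
    · rintro a ha b hb _ hc rfl
      exact h.not_mono ha.1 hb.1 hc.2
    · rintro a ha b hb _ hc rfl
      exact h.not_rainbow ha.1 hb.1 hc.2

namespace IsGallaiSchur

variable {α : Type*} {χ : ℕ → α} {m : ℕ}

theorem of_le_one (hm : m ≤ 1) : IsGallaiSchur m χ := by
  constructor <;> lia

theorem add_ne (h : IsGallaiSchur m χ) {a b : ℕ} (ha : 0 < a) (hb : 0 < b) (hab : a + b ≤ m)
    (heq : χ a = χ b) : χ (a + b) ≠ χ a :=
  fun hc ↦ h.not_mono ha hb hab ⟨heq, (hc.trans heq).symm⟩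

theorem add_eq_or_eq (h : IsGallaiSchur m χ) {a b : ℕ} (ha : 0 < a) (hb : 0 < b)
    (hab : a + b ≤ m) (hne : χ a ≠ χ b) : χ (a + b) = χ a ∨ χ (a + b) = χ b := by
  by_contra! hc
  exact h.not_rainbow ha hb hab ⟨hne, hc.1.symm, hc.2.symm⟩

theorem dilate (h : IsGallaiSchur m χ) {d : ℕ} (hd : 0 < d) :
    IsGallaiSchur (m / d) fun q ↦ χ (d * q) := by
  have hle {a b : ℕ} (hab : a + b ≤ m / d) : d * a + d * b ≤ m :=
    mul_add d a b ▸ (Nat.mul_le_mul_left d hab).trans (Nat.mul_div_le m d)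
  constructor <;> intro a b ha hb hab <;> rw [mul_add]
  · exact h.not_mono (Nat.mul_pos hd ha) (Nat.mul_pos hd hb) (hle hab)
  · exact h.not_rainbow (Nat.mul_pos hd ha) (Nat.mul_pos hd hb) (hle hab)

theorem two_ne_one (h : IsGallaiSchur m χ) (hm : 2 ≤ m) : χ 2 ≠ χ 1 :=
  h.add_ne one_pos one_pos hm rfl

theorem odd_eq_one_and_even_ne_one (h : IsGallaiSchur m χ) (h3 : 3 ≤ m → χ 3 = χ 1) (q : ℕ) :
    (2 * q + 1 ≤ m → χ (2 * q + 1) = χ 1) ∧ (0 < q → 2 * q ≤ m → χ (2 * q) ≠ χ 1) := by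
  induction q with
  | zero => simp
  | succ q ih =>
    obtain ⟨hodd, heven⟩ := ih
    have heven' (hq : 2 * (q + 1) ≤ m) : χ (2 * (q + 1)) ≠ χ 1 := by
      rw [show 2 * (q + 1) = 1 + (2 * q + 1) by ring]
      exact h.add_ne one_pos (by lia) (by lia) (hodd (by lia)).symm
    refine ⟨fun hq ↦ ?_, fun _ ↦ heven'⟩
    rcases q.eq_zero_or_pos with rfl | hpos
    · exact h3 hq
    -- Otherwise three splittings of `2 * q + 3` color `2`, `2 * q` and their sum alike.
    by_contra hne
    have eq_of_split {a b : ℕ} (ha : 0 < a) (hb : 0 < b) (hab : a + b = 2 * (q + 1) + 1)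
        (ha1 : χ a = χ 1) (hb1 : χ b ≠ χ 1) : χ b = χ (2 * (q + 1) + 1) := by
      rw [← hab] at hq hne ⊢
      refine ((h.add_eq_or_eq ha hb hq ?_).resolve_left ?_).symm
      · exact ha1 ▸ hb1.symm
      · exact ha1 ▸ hne
    have hlast := eq_of_split one_pos (by lia) (by ring) rfl (heven' (by lia))
    have hprev := eq_of_split three_pos (b := 2 * q) (by lia) (by ring) (h3 (by lia))
      (heven hpos (by lia))
    have htwo := eq_of_split (a := 2 * q + 1) (by lia) two_pos (by ring) (hodd (by lia))
      (h.two_ne_one (by lia))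
    exact h.add_ne two_pos (b := 2 * q) (by lia) (by lia) (htwo.trans hprev.symm)
      (by rw [show 2 + 2 * q = 2 * (q + 1) by ring, hlast, htwo])

theorem three_eq_two (h : IsGallaiSchur m χ) (hm : 3 ≤ m) (h3 : χ 3 ≠ χ 1) : χ 3 = χ 2 :=
  (h.add_eq_or_eq one_pos two_pos hm (h.two_ne_one (by lia)).symm).resolve_left h3

theorem four_eq_one (h : IsGallaiSchur m χ) (hm : 4 ≤ m) (h3 : χ 3 ≠ χ 1) : χ 4 = χ 1 := by
  have hne : χ 4 ≠ χ 2 := h.add_ne two_pos two_pos hm rfl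
  refine (h.add_eq_or_eq one_pos three_pos hm h3.symm).resolve_right ?_
  rwa [h.three_eq_two (by lia) h3]

theorem add_eq_right_of_split (h : IsGallaiSchur m χ) {n r a b : ℕ} (hn : 0 < n) (hr : 0 < r)
    (ha : 0 < a) (hb : 0 < b) (hab : a + b = n + r) (hm : n + r ≤ m) (hne : χ a ≠ χ b)
    (han : χ a ≠ χ n) (hbn : χ b ≠ χ n) (hrn : χ r ≠ χ n) : χ (n + r) = χ r := by
  refine (h.add_eq_or_eq hn hr hm hrn.symm).resolve_left fun heq ↦ ?_
  rw [← hab] at heq hm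
  exact (h.add_eq_or_eq ha hb hm hne).elim (fun e ↦ han (e ▸ heq)) (fun e ↦ hbn (e ▸ heq))

theorem five_mul_succ_ne (h : IsGallaiSchur m χ) (h3 : χ 3 ≠ χ 1) {q : ℕ}
    (hblock : ∀ r, 0 < r → r < 5 → 5 * q + r ≤ m → χ (5 * q + r) = χ r)
    (hq : 5 * (q + 1) ≤ m) : χ (5 * (q + 1)) ≠ χ 1 ∧ χ (5 * (q + 1)) ≠ χ 2 := by
  constructor
  · rw [show 5 * (q + 1) = 1 + (5 * q + 4) by ring]
    refine h.add_ne one_pos (by lia) (by lia) ?_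
    rw [hblock 4 (by lia) (by lia) (by lia), h.four_eq_one (by lia) h3]
  · rw [show 5 * (q + 1) = 2 + (5 * q + 3) by ring]
    refine h.add_ne two_pos (by lia) (by lia) ?_
    rw [hblock 3 (by lia) (by lia) (by lia), h.three_eq_two (by lia) h3]

theorem five_mul_add_eq (h : IsGallaiSchur m χ) (h3 : χ 3 ≠ χ 1) (q : ℕ) :
    ∀ r, 0 < r → r < 5 → 5 * q + r ≤ m → χ (5 * q + r) = χ r := by
  induction q with
  | zero => simp
  | succ q ih =>
    intro r hr0 hr5 hrm
    have h21 : χ 2 ≠ χ 1 := h.two_ne_one (by lia)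
    have h32 : χ 3 = χ 2 := h.three_eq_two (by lia) h3
    have h41 : χ 4 = χ 1 := h.four_eq_one (by lia) h3
    obtain ⟨hn1, hn2⟩ := h.five_mul_succ_ne h3 ih (by lia)
    have translate {r a b : ℕ} (hr : 0 < r) (ha : 0 < a) (hb : 0 < b)
        (hab : a + b = 5 * (q + 1) + r) (hm : 5 * (q + 1) + r ≤ m) (ha2 : χ a = χ 2)
        (hb1 : χ b = χ 1) (hr12 : χ r = χ 1 ∨ χ r = χ 2) : χ (5 * (q + 1) + r) = χ r :=
      h.add_eq_right_of_split (by lia) hr ha hb hab hm (by rwa [ha2, hb1]) (ha2 ▸ hn2.symm)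
        (hb1 ▸ hn1.symm) (hr12.elim (· ▸ hn1.symm) (· ▸ hn2.symm))
    have hlast : χ (5 * q + 4) = χ 1 := by rw [ih 4 (by lia) (by lia) (by lia), h41]
    have hfirst : χ (5 * (q + 1) + 1) = χ 1 :=
      translate one_pos two_pos (by lia) (by ring) (by lia) rfl hlast (.inl rfl)
    interval_cases r
    · exact hfirst
    · exact translate two_pos three_pos (by lia) (by ring) hrm h32 hlast (.inr rfl)
    · exact translate three_pos two_pos (by lia) (by ring) hrm rfl hfirst (.inr h32)
    · exact translate four_pos three_pos (by lia) (by ring) hrm h32 hfirst (.inl h41)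

theorem five_mul_ne (h : IsGallaiSchur m χ) (h3 : χ 3 ≠ χ 1) {q : ℕ} (hq : 0 < q)
    (hqm : 5 * q ≤ m) : χ (5 * q) ≠ χ 1 ∧ χ (5 * q) ≠ χ 2 := by
  obtain ⟨q, rfl⟩ := Nat.exists_eq_add_one.mpr hq
  exact h.five_mul_succ_ne h3 (h.five_mul_add_eq h3 q) hqm

theorem lt_gsBound_card_palette [DecidableEq α] (h : IsGallaiSchur m χ) :
    m < gsBound (palette χ m).card := by
  induction m using Nat.strong_induction_on generalizing χ with
  | _ m ih =>
    rcases m.eq_zero_or_pos with rfl | hm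
    · exact gsBound_pos _
    have h1 : χ 1 ∈ palette χ m := apply_mem_palette one_pos hm
    by_cases h3 : 3 ≤ m → χ 3 = χ 1
    · have hcard := card_palette_dilate_add_card_le two_pos (Finset.singleton_subset_iff.mpr h1)
        fun q hq hqm ↦ Finset.notMem_singleton.mpr ((h.odd_eq_one_and_even_ne_one h3 q).2 hq hqm)
      rw [Finset.card_singleton] at hcard
      have hhalf := ih (m / 2) (by lia) (h.dilate two_pos)
      calc
        m < 2 * gsBound (palette (fun q ↦ χ (2 * q)) (m / 2)).card := by lia
        _ ≤ gsBound ((palette (fun q ↦ χ (2 * q)) (m / 2)).card + 1) := two_mul_gsBound_le _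
        _ ≤ gsBound (palette χ m).card := gsBound_mono hcard
    · obtain ⟨hm3, h3⟩ := Classical.not_imp.mp h3
      have hm2 : 2 ≤ m := Nat.le_of_succ_le hm3
      have h2 : χ 2 ∈ palette χ m := apply_mem_palette two_pos hm2
      have hcard := card_palette_dilate_add_card_le (S := {χ 1, χ 2}) (d := 5) (by lia)
        (Finset.insert_subset h1 (Finset.singleton_subset_iff.mpr h2))
        fun q hq hqm ↦ by simpa using h.five_mul_ne h3 hq hqm
      rw [Finset.card_pair (h.two_ne_one hm2).symm] at hcard
      have hfifth := ih (m / 5) (by lia) (h.dilate (by lia))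
      calc
        m < 5 * gsBound (palette (fun q ↦ χ (5 * q)) (m / 5)).card := by lia
        _ = gsBound ((palette (fun q ↦ χ (5 * q)) (m / 5)).card + 2) := (gsBound_add_two _).symm
        _ ≤ gsBound (palette χ m).card := gsBound_mono hcard

end IsGallaiSchur

/-- The coloring that carries `χ` over to the multiples of `5` and gives color `u` to the residues
`±1` and color `v` to the residues `±2` modulo `5`. -/
def quintupling {α : Type*} (χ : ℕ → α) (u v : α) (x : ℕ) : α :=
  if x % 5 = 0 then χ (x / 5) else if x % 5 = 1 ∨ x % 5 = 4 then u else v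

section Quintupling

variable {α : Type*} {χ : ℕ → α} {u v : α} {m x y : ℕ}

theorem quintupling_of_mod_eq_zero (hx : x % 5 = 0) : quintupling χ u v x = χ (x / 5) :=
  if_pos hx

theorem quintupling_of_mod_eq_one_or_four (hx : x % 5 = 1 ∨ x % 5 = 4) :
    quintupling χ u v x = u := by
  rw [quintupling, if_neg (by lia), if_pos hx]

theorem quintupling_of_mod_eq_two_or_three (hx : x % 5 = 2 ∨ x % 5 = 3) :
    quintupling χ u v x = v := by
  rw [quintupling, if_neg (by lia), if_neg (by lia)]

theorem quintupling_five_mul (q : ℕ) : quintupling χ u v (5 * q) = χ q := by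
  rw [quintupling_of_mod_eq_zero (by lia), Nat.mul_div_cancel_left q (by lia)]

theorem quintupling_congr (hx : x % 5 ≠ 0) (hxy : x % 5 = y % 5 ∨ (x + y) % 5 = 0) :
    quintupling χ u v x = quintupling χ u v y := by
  rcases (by lia : (x % 5 = 1 ∨ x % 5 = 4) ∨ (x % 5 = 2 ∨ x % 5 = 3)) with h1 | h2
  · rw [quintupling_of_mod_eq_one_or_four h1, quintupling_of_mod_eq_one_or_four (by lia)]
  · rw [quintupling_of_mod_eq_two_or_three h2, quintupling_of_mod_eq_two_or_three (by lia)]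

variable [DecidableEq α]

theorem palette_quintupling :
    palette (quintupling χ u v) (5 * m + 4) = insert u (insert v (palette χ m)) := by
  ext i
  simp only [Finset.mem_insert, mem_palette]
  constructor
  · rintro ⟨x, ⟨hx, hxm⟩, rfl⟩
    rcases (by lia : x % 5 = 0 ∨ (x % 5 = 1 ∨ x % 5 = 4) ∨ (x % 5 = 2 ∨ x % 5 = 3))
      with h0 | h1 | h2
    · exact .inr (.inr ⟨x / 5, by lia, (quintupling_of_mod_eq_zero h0).symm⟩)
    · exact .inl (quintupling_of_mod_eq_one_or_four h1)
    · exact .inr (.inl (quintupling_of_mod_eq_two_or_three h2))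
  · rintro (rfl | rfl | ⟨q, hq, rfl⟩)
    · exact ⟨1, by lia, quintupling_of_mod_eq_one_or_four (.inl rfl)⟩
    · exact ⟨2, by lia, quintupling_of_mod_eq_two_or_three (.inl rfl)⟩
    · exact ⟨5 * q, by lia, quintupling_five_mul q⟩

theorem mod_five_of_quintupling_eq (huv : u ≠ v) (hu : u ∉ palette χ m) (hv : v ∉ palette χ m)
    (hx : 0 < x) (hxm : x ≤ 5 * m + 4) (hy : 0 < y) (hym : y ≤ 5 * m + 4)
    (hxy : quintupling χ u v x = quintupling χ u v y) : x % 5 = y % 5 ∨ (x + y) % 5 = 0 := by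
  have hu' {q : ℕ} (hq : 0 < q) (hqm : q ≤ m) : χ q ≠ u :=
    ne_of_mem_of_not_mem (apply_mem_palette hq hqm) hu
  have hv' {q : ℕ} (hq : 0 < q) (hqm : q ≤ m) : χ q ≠ v :=
    ne_of_mem_of_not_mem (apply_mem_palette hq hqm) hv
  unfold quintupling at hxy
  split_ifs at hxy
  · lia
  · exact absurd hxy (hu' (by lia) (by lia))
  · exact absurd hxy (hv' (by lia) (by lia))
  · exact absurd hxy.symm (hu' (by lia) (by lia))
  · lia
  · exact absurd hxy huv
  · exact absurd hxy.symm (hv' (by lia) (by lia))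
  · exact absurd hxy.symm huv
  · lia

theorem IsGallaiSchur.quintupling (h : IsGallaiSchur m χ) (huv : u ≠ v) (hu : u ∉ palette χ m)
    (hv : v ∉ palette χ m) : IsGallaiSchur (5 * m + 4) (quintupling χ u v) := by
  constructor <;> intro a b ha hb hab <;> by_cases hmul : a % 5 = 0 ∧ b % 5 = 0
  · obtain ⟨⟨a, rfl⟩, ⟨b, rfl⟩⟩ := hmul.imp Nat.dvd_of_mod_eq_zero Nat.dvd_of_mod_eq_zero
    simp only [← mul_add, quintupling_five_mul]
    exact h.not_mono (by lia) (by lia) (by lia)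
  · rintro ⟨hχab, hχbc⟩
    have hab5 := mod_five_of_quintupling_eq huv hu hv ha (by lia) hb (by lia) hχab
    have hbc5 := mod_five_of_quintupling_eq huv hu hv hb (by lia) (by lia) hab hχbc
    lia
  · obtain ⟨⟨a, rfl⟩, ⟨b, rfl⟩⟩ := hmul.imp Nat.dvd_of_mod_eq_zero Nat.dvd_of_mod_eq_zero
    simp only [← mul_add, quintupling_five_mul]
    exact h.not_rainbow (by lia) (by lia) (by lia)
  · rintro ⟨hχab, hχac, hχbc⟩
    -- Two of `a`, `b` and `a + b` agree up to sign modulo `5` and are not divisible by `5`.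
    by_cases ha0 : a % 5 = 0
    · exact hχbc (quintupling_congr (by lia) (by lia))
    by_cases hab5 : a % 5 = b % 5 ∨ (a + b) % 5 = 0
    · exact hχab (quintupling_congr ha0 hab5)
    by_cases hac5 : a % 5 = (a + b) % 5 ∨ (a + (a + b)) % 5 = 0
    · exact hχac (quintupling_congr ha0 hac5)
    · exact hχbc (quintupling_congr (by lia) (by lia))

end Quintupling

theorem exists_strongGS (r : ℕ) : ∃ χ : ℕ → ℕ, StrongGS (gsBound r - 1) (Finset.Icc 1 r) χ := by
  simp only [strongGS_iff]
  induction r using Nat.twoStepInduction with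
  | zero => exact ⟨fun _ ↦ 1, IsGallaiSchur.of_le_one (by simp [gsBound]), rfl⟩
  | one => exact ⟨fun _ ↦ 1, IsGallaiSchur.of_le_one (by simp [gsBound]), rfl⟩
  | more r ih _ =>
    obtain ⟨χ, h, hpal⟩ := ih
    have hlen : gsBound (r + 2) - 1 = 5 * (gsBound r - 1) + 4 := by
      have := gsBound_pos r
      rw [gsBound_add_two]
      lia
    rw [hlen]
    refine ⟨quintupling χ (r + 1) (r + 2), h.quintupling (by lia) ?_ ?_, ?_⟩
    · simp [hpal]
    · simp [hpal]
    · rw [palette_quintupling, hpal]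
      ext i
      simp only [Finset.mem_insert, Finset.mem_Icc]
      lia

theorem StrongGS.lt_gsBound {m : ℕ} {C : Finset ℕ} {χ : ℕ → ℕ} (h : StrongGS m C χ) :
    m < gsBound C.card := by
  obtain ⟨hχ, rfl⟩ := strongGS_iff.mp h
  exact hχ.lt_gsBound_card_palette

theorem strong_GS_even_general (r : ℕ) :
    (∃ χ : ℕ → ℕ, StrongGS (gsBound r - 1) (Finset.Icc 1 r) χ) ∧
    (∀ m, gsBound r ≤ m → ∀ χ : ℕ → ℕ, ¬ StrongGS m (Finset.Icc 1 r) χ) ∧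
    GS r = gsBound r := by
  obtain ⟨χ, hχ⟩ := exists_strongGS r
  have hnone : ∀ m, gsBound r ≤ m → ∀ χ : ℕ → ℕ, ¬ StrongGS m (Finset.Icc 1 r) χ :=
    fun m hm χ h ↦ hm.not_gt (by simpa using h.lt_gsBound)
  have hleast : IsLeast {n | ∀ m, n ≤ m → ∀ χ : ℕ → ℕ, ¬ StrongGS m (Finset.Icc 1 r) χ}
      (gsBound r) :=
    ⟨hnone, fun n hn ↦ not_lt.mp fun hlt ↦ hn _ (Nat.le_sub_one_of_lt hlt) χ hχ⟩
  exact ⟨⟨χ, hχ⟩, hnone, hleast.csInf_eq⟩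

/-- For every even positive `r`, there is a strong Gallai–Schur `r`-coloring of
`[1, 5^(r/2) - 1]`, no strong Gallai–Schur `r`-coloring of `[1, m]` exists for
any `m ≥ 5^(r/2)`, and consequently `GS r = 5^(r/2)`. -/
theorem strong_GS_even (r : ℕ) (hr : 0 < r) (hre : Even r) :
    (∃ χ : ℕ → ℕ, StrongGS (5 ^ (r / 2) - 1) (Finset.Icc 1 r) χ) ∧
    (∀ m, 5 ^ (r / 2) ≤ m → ∀ χ : ℕ → ℕ, ¬ StrongGS m (Finset.Icc 1 r) χ) ∧
    GS r = 5 ^ (r / 2) := by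
  simpa [gsBound, Nat.even_iff.mp hre] using strong_GS_even_general r
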